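/- Let ⋈ ∈ {<,>} and let ⋈̲ be its reflexive closure (≤, respectively ≥). For every HyperLTL_temp formula ψ whose free variables are among π₁,…,πₖ, every weighted Kripke structure K, and every v ∈ [0,1], there exists a nondeterministic Büchi automaton A over the alphabet W^{AP_{≤k}} such that for every trace assignment Π over the free variables of ψ: (1) if ⟦ψ⟧_Π^{𝕋(K)} ⋈ v and all traces in the image of Π belong to 𝕋(K), then A accepts t_Π; and (2) if A accepts t_Π and t_Π is a lasso, then all traces in the image of Π belong to 𝕃(K) and ⟦ψ⟧_Π^{𝕃(K)} ⋈̲ v. -/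

import Mathlib

open Set

noncomputable section

/-- A (weighted) trace assigns to each time step and atomic proposition a weight in `[0,1]`. -/
abbrev Trace (AP : Type) : Type := ℕ → AP → unitInterval

/-- Boolean traces: all weights are `0` or `1`. -/
def IsBoolTrace {AP : Type} (t : Trace AP) : Prop :=
  ∀ i p, (t i p : ℝ) = 0 ∨ (t i p : ℝ) = 1

/-- Lassos: eventually periodic traces, i.e. traces of the form `u·v^ω`. -/
def IsLasso {AP : Type} (t : Trace AP) : Prop :=
  ∃ N c : ℕ, 0 < c ∧ ∀ n, N ≤ n → t (n + c) = t n

/-- Shifting a trace assignment: `Π[i,∞]`. -/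
def shiftA {AP Var : Type} (ρ : Var → Trace AP) (i : ℕ) : Var → Trace AP :=
  fun π n => ρ π (n + i)

/-- `prefMin g i = min_{0 ≤ j < i} g j` (with the empty minimum being `1`). -/
def prefMin (g : ℕ → ℝ) : ℕ → ℝ
  | 0 => 1
  | n + 1 => min (prefMin g n) (g n)

/-- A discounting sequence: strictly decreasing, with values in `[0,1]` and limit `0`. -/
def IsDiscounting (η : ℕ → ℝ) : Prop :=
  StrictAnti η ∧ (∀ i, η i ∈ Set.Icc (0:ℝ) 1) ∧
    Filter.Tendsto η Filter.atTop (nhds 0)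

/-- Quantifier-free HyperLTL_temp formulas, over a set `D` (indexing the discounting
sequences). -/
inductive TQF (AP Var D : Type) : Type where
  | atom : AP → Var → TQF AP Var D
  | neg : TQF AP Var D → TQF AP Var D
  | or : TQF AP Var D → TQF AP Var D → TQF AP Var D
  | next : TQF AP Var D → TQF AP Var D
  | untl : TQF AP Var D → TQF AP Var D → TQF AP Var D
  | untlD : D → TQF AP Var D → TQF AP Var D → TQF AP Var D

/-- HyperLTL_temp formulas: a prefix of quantifiers over a quantifier-free formula. -/
inductive TForm (AP Var D : Type) : Type where
  | qf : TQF AP Var D → TForm AP Var D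
  | ex : Var → TForm AP Var D → TForm AP Var D
  | all : Var → TForm AP Var D → TForm AP Var D

variable {AP Var D : Type}

/-- Satisfaction value of quantifier-free HyperLTL_temp formulas, where `η` interprets the
discounting sequence indices. -/
def tsemQF (η : D → ℕ → ℝ) : TQF AP Var D → (Var → Trace AP) → Set (Trace AP) → ℝ
  | .atom p π, ρ, _ => (ρ π 0 p : ℝ)
  | .neg φ, ρ, T => 1 - tsemQF η φ ρ T
  | .or φ₁ φ₂, ρ, T => max (tsemQF η φ₁ ρ T) (tsemQF η φ₂ ρ T)
  | .next φ, ρ, T => tsemQF η φ (shiftA ρ 1) T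
  | .untl φ₁ φ₂, ρ, T =>
      ⨆ i : ℕ, min (tsemQF η φ₂ (shiftA ρ i) T)
        (prefMin (fun j => tsemQF η φ₁ (shiftA ρ j) T) i)
  | .untlD d φ₁ φ₂, ρ, T =>
      ⨆ i : ℕ, min (η d i * tsemQF η φ₂ (shiftA ρ i) T)
        (prefMin (fun j => η d j * tsemQF η φ₁ (shiftA ρ j) T) i)

/-- Satisfaction value `⟦ψ⟧_Π^T` of HyperLTL_temp formulas. -/
def tsem [DecidableEq Var] (η : D → ℕ → ℝ) :
    TForm AP Var D → (Var → Trace AP) → Set (Trace AP) → ℝ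
  | .qf φ, ρ, T => tsemQF η φ ρ T
  | .ex π ψ, ρ, T => sSup ((fun t => tsem η ψ (Function.update ρ π t) T) '' T)
  | .all π ψ, ρ, T => sInf ((fun t => tsem η ψ (Function.update ρ π t) T) '' T)

/-- The variables occurring in a quantifier-free formula. -/
def varsTQF : TQF AP Var D → Set Var
  | .atom _ π => {π}
  | .neg φ => varsTQF φ
  | .or φ₁ φ₂ => varsTQF φ₁ ∪ varsTQF φ₂
  | .next φ => varsTQF φ
  | .untl φ₁ φ₂ => varsTQF φ₁ ∪ varsTQF φ₂
  | .untlD _ φ₁ φ₂ => varsTQF φ₁ ∪ varsTQF φ₂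

/-- The free variables of a HyperLTL_temp formula. -/
def freeVars : TForm AP Var D → Set Var
  | .qf φ => varsTQF φ
  | .ex π ψ => freeVars ψ \ {π}
  | .all π ψ => freeVars ψ \ {π}

/-- A weighted Kripke structure over `AP`: a finite state set, a finite weight set
`W ⊆ [0,1]`, initial states, a total transition relation, and a weighted labeling. -/
structure Kripke (AP : Type) where
  S : Type
  [finS : Fintype S]
  W : Set ℝ
  Wfin : W.Finite
  Wsub : W ⊆ Set.Icc (0:ℝ) 1
  init : Set S
  tr : S → S → Prop
  total : ∀ s, ∃ s', tr s s'
  L : S → AP → unitInterval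
  L_mem : ∀ s p, ((L s p : ℝ)) ∈ W

/-- The set `𝕋(K)` of traces of a Kripke structure. -/
def Kripke.Traces {AP : Type} (K : Kripke AP) : Set (Trace AP) :=
  {t | ∃ s : ℕ → K.S, s 0 ∈ K.init ∧ (∀ i, K.tr (s i) (s (i + 1))) ∧
        ∀ i p, t i p = K.L (s i) p}

/-- The set `𝕃(K)` of lassos of a Kripke structure. -/
def Kripke.Lassos {AP : Type} (K : Kripke AP) : Set (Trace AP) :=
  {t | t ∈ K.Traces ∧ IsLasso t}

/-- A nondeterministic Büchi automaton over the alphabet `Alph`. -/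
structure NBA (Alph : Type) where
  Q : Type
  [finQ : Fintype Q]
  init : Set Q
  δ : Q → Alph → Set Q
  acc : Set Q

/-- Büchi acceptance: some run visits the accepting set infinitely often. -/
def NBA.Accepts {Alph : Type} (A : NBA Alph) (w : ℕ → Alph) : Prop :=
  ∃ r : ℕ → A.Q, r 0 ∈ A.init ∧ (∀ i, r (i + 1) ∈ A.δ (r i) (w i)) ∧
    ∀ N, ∃ n, N ≤ n ∧ r n ∈ A.acc

/-- The encoding `t_Π` of a trace assignment `[π₁ ↦ t₁, …, π_k ↦ t_k]` as a single trace
over the atomic propositions `AP_{≤k}`, identified with `AP × Fin k`. -/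
def encode {AP : Type} {k : ℕ} (ts : Fin k → Trace AP) : Trace (AP × Fin k) :=
  fun n q => ts q.2 n q.1

/-!
Call a language of infinite words recognizable if a finite deterministic semiautomaton can colour
finite words in such a way that membership of an infinite word depends only on the sequence of
colours of the blocks of some factorization of it. This notion is visibly stable under complements
and, by a subset construction, under projections, so no determinization is needed; Ramsey's theorem
makes the colours of the blocks eventually constant, which yields both an equivalent Büchi
automaton and, for every eventually periodic word, an eventually periodic witness of a projection.

For a formula and a threshold `v`, one and the same recognizable language contains the assignments
of value above `v` and omits those of value below `v`, over all traces as well as, on lassos, over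
lassos only. A value equal to `v` may fall on either side, which makes the induction pass through
suprema and infima that are not attained. For a discounted until only the finitely many positions
`i` with `η i ≥ v` matter.
-/

variable {Γ Γ' B C C' : Type*}

/-! ### Words and semiautomata -/

/-- The suffix `w[i,∞]` of an infinite word. -/
def suffix (w : ℕ → Γ) (i : ℕ) : ℕ → Γ := fun n => w (n + i)

theorem suffix_apply_zero (w : ℕ → Γ) (i : ℕ) : suffix w i 0 = w i := congrArg w (zero_add i)

theorem suffix_suffix (w : ℕ → Γ) (i j : ℕ) : suffix (suffix w i) j = suffix w (j + i) :=
  funext fun n => congrArg w (Nat.add_assoc n j i)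

/-- The convolution of two infinite words: the word over the product alphabet whose
components they are. -/
def wordPair (w : ℕ → Γ) (z : ℕ → B) : ℕ → Γ × B := fun n => (w n, z n)

/-- A deterministic semiautomaton: a transition table with an initial state but no acceptance
condition. It is used to colour the finite factors of infinite words. -/
structure Semiautomaton (Γ C : Type*) where
  start : C
  step : C → Γ → C

namespace Semiautomaton

/-- The colour of the factor `w[m,n)`: the state that the semiautomaton reaches on it. -/
def colour (F : Semiautomaton Γ C) (w : ℕ → Γ) (m n : ℕ) : C :=
  (List.Ico m n).foldl (fun c i => F.step c (w i)) F.start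

variable (F : Semiautomaton Γ C)

@[simp]
theorem colour_self (w : ℕ → Γ) (m : ℕ) : F.colour w m m = F.start := by
  simp [colour]

theorem colour_succ (w : ℕ → Γ) {m n : ℕ} (h : m ≤ n) :
    F.colour w m (n + 1) = F.step (F.colour w m n) (w n) := by
  simp [colour, List.Ico.succ_top h, List.foldl_append]

variable {F}

theorem colour_eq_of_step {w : ℕ → Γ} {m : ℕ} {g : ℕ → C} (start : g m = F.start)
    (step : ∀ n, m ≤ n → g (n + 1) = F.step (g n) (w n)) {n : ℕ} (h : m ≤ n) :
    F.colour w m n = g n := by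
  induction n, h using Nat.le_induction with
  | base => rw [colour_self, start]
  | succ n hn ih => rw [F.colour_succ w hn, ih, step n hn]

theorem colour_congr {w w' : ℕ → Γ} {m n : ℕ} (h : EqOn w w' (Ico m n)) :
    F.colour w m n = F.colour w' m n :=
  List.foldl_ext _ _ _ fun c _ hi => congrArg (F.step c) (h (List.Ico.mem.1 hi))

theorem colour_suffix (w : ℕ → Γ) (s m n : ℕ) :
    F.colour (suffix w s) m n = F.colour w (m + s) (n + s) := by
  rw [colour, colour, ← List.Ico.map_add, List.foldl_map]
  simp only [suffix, add_comm]

end Semiautomaton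

/-! ### Factorizations into blocks -/

/-- A cut sequence `a 0 ≤ a 1 ≤ ⋯ → ∞`. It factorizes the positions from `a 0` on into the
consecutive, possibly empty, blocks `[a i, a (i+1))`. -/
structure IsCut (a : ℕ → ℕ) : Prop where
  monotone : Monotone a
  tendsto : Filter.Tendsto a Filter.atTop Filter.atTop

/-- The cut sequence that remains of `a` when its block `j` is entered at position `p`. -/
def cutTail (a : ℕ → ℕ) (j p : ℕ) : ℕ → ℕ
  | 0 => p
  | i + 1 => a (j + 1 + i)

namespace IsCut

variable {a a' : ℕ → ℕ}

theorem of_strictMono (ha : StrictMono a) : IsCut a := ⟨ha.monotone, ha.tendsto_atTop⟩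

theorem exists_block (ha : IsCut a) {p : ℕ} (hp : a 0 ≤ p) :
    ∃ i, p ∈ Ico (a i) (a (i + 1)) := by
  have hex : ∃ i, p < a i := (ha.tendsto.eventually_gt_atTop p).exists
  have hne : Nat.find hex ≠ 0 := fun h0 => hp.not_gt (h0 ▸ Nat.find_spec hex)
  obtain ⟨i, hi⟩ := Nat.exists_eq_succ_of_ne_zero hne
  exact ⟨i, not_lt.1 (Nat.find_min hex (by omega)), by simpa only [hi] using Nat.find_spec hex⟩

protected theorem cutTail (ha : IsCut a) {j p : ℕ} (hp : p ≤ a (j + 1)) :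
    IsCut (cutTail a j p) where
  monotone := monotone_nat_of_le_succ fun
    | 0 => hp
    | _ + 1 => ha.monotone (Nat.le_succ _)
  tendsto := (Filter.tendsto_add_atTop_iff_nat 1).1 <|
    ha.tendsto.comp <| Filter.tendsto_atTop_mono (Nat.le_add_left · (j + 1)) Filter.tendsto_id

theorem exists_first_nonempty_block (ha : IsCut a) (ha' : Monotone a')
    (h : ∀ i, a i < a (i + 1) ↔ a' i < a' (i + 1)) :
    ∃ j, (a j = a 0 ∧ a j < a (j + 1)) ∧ a' j = a' 0 ∧ a' j < a' (j + 1) := by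
  have hex : ∃ j, a j < a (j + 1) := (ha.exists_block le_rfl).imp fun _ hj => hj.1.trans_lt hj.2
  have hempty : ∀ i ≤ Nat.find hex, a i = a 0 ∧ a' i = a' 0 := by
    intro i hi
    induction i with
    | zero => exact ⟨rfl, rfl⟩
    | succ i ih =>
      have hi' : ¬ a i < a (i + 1) := Nat.find_min hex hi
      obtain ⟨hai, hai'⟩ := ih (Nat.le_of_succ_le hi)
      exact ⟨hai ▸ ((ha.monotone i.le_succ).antisymm (not_lt.1 hi')).symm,
        hai' ▸ ((ha' i.le_succ).antisymm (not_lt.1 ((h i).not.1 hi'))).symm⟩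
  obtain ⟨hj, hj'⟩ := hempty _ le_rfl
  have hlt := Nat.find_spec hex
  exact ⟨Nat.find hex, ⟨hj, hlt⟩, hj', (h _).1 hlt⟩

end IsCut

theorem exists_eqOn_blocks {a : ℕ → ℕ} (ha : Monotone a) (y : ℕ → ℕ → B) :
    ∃ z, ∀ i, EqOn z (y i) (Ico (a i) (a (i + 1))) := by
  classical
  refine ⟨fun p => if h : ∃ i, p ∈ Ico (a i) (a (i + 1)) then y h.choose p else y 0 p,
    fun i p hp => ?_⟩
  have hex : ∃ i, p ∈ Ico (a i) (a (i + 1)) := ⟨i, hp⟩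
  have hi : hex.choose = i := by
    by_contra hne
    exact (ha.pairwise_disjoint_on_Ico_succ hne).le_bot ⟨hex.choose_spec, hp⟩
  simp only [dif_pos hex, hi]

/-! ### Recognizable languages of infinite words -/

namespace Semiautomaton

/-- `F` saturates the language `X` if membership of a word in `X` depends only on the colours
of the blocks of some, equivalently any, factorization of it. The factorized words are given as
suffixes, so that the cut sequences need not start at `0`. -/
def Saturates (F : Semiautomaton Γ C) (X : Set (ℕ → Γ)) : Prop :=
  ∀ ⦃w w' : ℕ → Γ⦄ ⦃a a' : ℕ → ℕ⦄, IsCut a → IsCut a' →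
    (∀ i, F.colour w (a i) (a (i + 1)) = F.colour w' (a' i) (a' (i + 1))) →
    suffix w (a 0) ∈ X → suffix w' (a' 0) ∈ X

variable {F : Semiautomaton Γ C} {X : Set (ℕ → Γ)}

theorem Saturates.of_colour {G : Semiautomaton Γ C'} (hF : F.Saturates X) (f : C' → C)
    (hf : ∀ w m n, m ≤ n → F.colour w m n = f (G.colour w m n)) : G.Saturates X :=
  fun _ _ _ _ ha ha' h => hF ha ha' fun i => by
    rw [hf _ _ _ (ha.monotone i.le_succ), hf _ _ _ (ha'.monotone i.le_succ), h]

theorem Saturates.compl (hF : F.Saturates X) : F.Saturates Xᶜ :=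
  fun _ _ _ _ ha ha' h hw hw' => hw (hF ha' ha (fun i => (h i).symm) hw')

theorem Saturates.suffix_mem (hF : F.Saturates X) {w w' : ℕ → Γ} {a a' : ℕ → ℕ} (ha : IsCut a)
    (ha' : IsCut a') (h : ∀ i, F.colour w (a i) (a (i + 1)) = F.colour w' (a' i) (a' (i + 1)))
    {j p p' : ℕ} (hp : p ≤ a (j + 1)) (hp' : p' ≤ a' (j + 1))
    (hpp' : F.colour w p (a (j + 1)) = F.colour w' p' (a' (j + 1))) (hw : suffix w p ∈ X) :
    suffix w' p' ∈ X :=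
  hF (ha.cutTail hp) (ha'.cutTail hp') (fun
    | 0 => hpp'
    | i + 1 => h (j + 1 + i)) hw

end Semiautomaton

/-- A language of infinite words is recognizable if a finite semiautomaton saturates it. This is
the algebraic form of `ω`-regularity. -/
def Recognizable (X : Set (ℕ → Γ)) : Prop :=
  ∃ (C : Type) (_ : Finite C) (F : Semiautomaton Γ C), F.Saturates X

/-- The semiautomaton that runs all members of a family in parallel. -/
def Semiautomaton.pi {ι : Type*} {C : ι → Type*} (F : ∀ i, Semiautomaton Γ (C i)) :
    Semiautomaton Γ (∀ i, C i) where
  start i := (F i).start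
  step c l i := (F i).step (c i) l

theorem Semiautomaton.colour_pi {ι : Type*} {C : ι → Type*} (F : ∀ i, Semiautomaton Γ (C i))
    (w : ℕ → Γ) {m n : ℕ} (h : m ≤ n) :
    (pi F).colour w m n = fun i => (F i).colour w m n :=
  colour_eq_of_step (g := fun n i => (F i).colour w m n)
    (funext fun i => (F i).colour_self w m) (fun _ hn => funext fun i => (F i).colour_succ w hn) h

/-- The semiautomaton that reads a word through the letter map `g`. -/
def Semiautomaton.comap (F : Semiautomaton Γ' C) (g : Γ → Γ') : Semiautomaton Γ C where
  start := F.start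
  step c l := F.step c (g l)

/-- The semiautomaton that computes the colours of a factor and of the factor without its first
letter `l`, and the truth value of `P l`. -/
def Semiautomaton.cons (F : Semiautomaton Γ C) (P : Γ → Prop) :
    Semiautomaton Γ (C × Option (Prop × C)) where
  start := (F.start, none)
  step c l := (F.step c.1 l, some (c.2.elim (P l, F.start) fun d => (d.1, F.step d.2 l)))

theorem Semiautomaton.colour_cons (F : Semiautomaton Γ C) (P : Γ → Prop) (w : ℕ → Γ) {m n : ℕ}
    (h : m ≤ n) : (F.cons P).colour w m n =
      (F.colour w m n, if m < n then some (P (w m), F.colour w (m + 1) n) else none) := by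
  refine colour_eq_of_step (g := fun n => (F.colour w m n,
    if m < n then some (P (w m), F.colour w (m + 1) n) else none)) ?_ (fun n hn => ?_) h
  · simp [cons]
  · obtain rfl | hlt := hn.eq_or_lt
    · simp [cons, F.colour_succ]
    · simp [cons, F.colour_succ _ hn, F.colour_succ _ hlt, hlt, Nat.lt_succ_of_lt hlt]

/-- The semiautomaton that, besides the colour of a factor, computes the set of colours of its
nonempty suffixes, and the pairs formed by the colour of such a suffix together with the colours
of the strictly longer suffixes. -/
def Semiautomaton.suffixColours (F : Semiautomaton Γ C) :
    Semiautomaton Γ (C × Set C × Set (C × Set C)) where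
  start := (F.start, ∅, ∅)
  step c l := (F.step c.1 l, (F.step · l) '' insert F.start c.2.1,
    (fun d => (F.step d.1 l, (F.step · l) '' d.2)) '' insert (F.start, c.2.1) c.2.2)

theorem Semiautomaton.colour_suffixColours (F : Semiautomaton Γ C) (w : ℕ → Γ) {m n : ℕ}
    (h : m ≤ n) : F.suffixColours.colour w m n = (F.colour w m n, (F.colour w · n) '' Ico m n,
      (fun p => (F.colour w p n, (F.colour w · n) '' Ico m p)) '' Ico m n) := by
  refine colour_eq_of_step (g := fun n => (F.colour w m n, (F.colour w · n) '' Ico m n,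
      (fun p => (F.colour w p n, (F.colour w · n) '' Ico m p)) '' Ico m n))
    (by simp [suffixColours]) (fun n hn => ?_) h
  have hIco : Ico m (n + 1) = insert n (Ico m n) := (insert_Ico_right_eq_Ico_add_one hn).symm
  have hstep : ∀ {p}, p ≤ n → (F.colour w · (n + 1)) '' Ico m p =
      (F.step · (w n)) '' ((F.colour w · n) '' Ico m p) := fun hp => by
    rw [image_image]
    exact image_congr fun q hq => F.colour_succ w (hq.2.le.trans hp)
  refine Prod.ext (F.colour_succ w hn) (Prod.ext ?_ ?_)
  · simp only [suffixColours, hIco, image_insert_eq, hstep le_rfl, F.colour_succ w le_rfl,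
      F.colour_self]
  · simp only [suffixColours, hIco, image_insert_eq, hstep le_rfl, F.colour_succ w le_rfl,
      F.colour_self, image_image]
    congr 1
    exact image_congr fun p hp => Prod.ext (F.colour_succ w hp.2.le) <| by
      simpa only [image_image] using hstep hp.2.le

namespace Recognizable

variable {X Y : Set (ℕ → Γ)}

protected theorem compl : Recognizable X → Recognizable Xᶜ
  | ⟨C, hC, F, hF⟩ => ⟨C, hC, F, hF.compl⟩

protected theorem univ : Recognizable (univ : Set (ℕ → Γ)) :=
  ⟨Unit, inferInstance, ⟨(), fun _ _ => ()⟩, fun _ _ _ _ _ _ _ _ => trivial⟩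

protected theorem empty : Recognizable (∅ : Set (ℕ → Γ)) :=
  compl_univ (α := ℕ → Γ) ▸ Recognizable.univ.compl

theorem exists_common {ι : Type} [Finite ι] {X : ι → Set (ℕ → Γ)}
    (hX : ∀ i, Recognizable (X i)) :
    ∃ (C : Type) (_ : Finite C) (F : Semiautomaton Γ C), ∀ i, F.Saturates (X i) := by
  choose C hC F hF using hX
  exact ⟨∀ i, C i, inferInstance, .pi F, fun i =>
    (hF i).of_colour (· i) fun w m n h => (congrFun (Semiautomaton.colour_pi F w h) i).symm⟩

protected theorem iInter {ι : Type} [Finite ι] {X : ι → Set (ℕ → Γ)}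
    (hX : ∀ i, Recognizable (X i)) : Recognizable (⋂ i, X i) := by
  obtain ⟨C, hC, F, hF⟩ := exists_common hX
  exact ⟨C, hC, F, fun _ _ _ _ ha ha' h hw =>
    mem_iInter.2 fun i => hF i ha ha' h (mem_iInter.1 hw i)⟩

protected theorem iUnion {ι : Type} [Finite ι] {X : ι → Set (ℕ → Γ)}
    (hX : ∀ i, Recognizable (X i)) : Recognizable (⋃ i, X i) := by
  simpa only [compl_iInter, compl_compl] using (Recognizable.iInter fun i => (hX i).compl).compl

protected theorem inter (hX : Recognizable X) (hY : Recognizable Y) : Recognizable (X ∩ Y) :=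
  inter_eq_iInter ▸ Recognizable.iInter (Bool.forall_bool.2 ⟨hY, hX⟩)

protected theorem union (hX : Recognizable X) (hY : Recognizable Y) : Recognizable (X ∪ Y) :=
  union_eq_iUnion ▸ Recognizable.iUnion (Bool.forall_bool.2 ⟨hY, hX⟩)

protected theorem comap {X : Set (ℕ → Γ')} (hX : Recognizable X) (g : Γ → Γ') :
    Recognizable {w | g ∘ w ∈ X} := by
  obtain ⟨C, hC, F, hF⟩ := hX
  exact ⟨C, hC, F.comap g, fun w w' _ _ ha ha' h hw =>
    hF (w := g ∘ w) (w' := g ∘ w') ha ha' h hw⟩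

protected theorem cons (P : Γ → Prop) (hX : Recognizable X) :
    Recognizable {w | P (w 0) ∧ suffix w 1 ∈ X} := by
  obtain ⟨C, hC, F, hF⟩ := hX
  refine ⟨C × Option (Prop × C), inferInstance, F.cons P, fun w w' a a' ha ha' h hw => ?_⟩
  simp only [F.colour_cons P _ (ha.monotone (Nat.le_succ _)),
    F.colour_cons P _ (ha'.monotone (Nat.le_succ _)), Prod.mk.injEq] at h
  have hlt : ∀ i, a i < a (i + 1) ↔ a' i < a' (i + 1) := fun i => by
    simpa only [Option.isSome_ite, eq_iff_iff] using congrArg (·.isSome = true) (h i).2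
  obtain ⟨j, ⟨hj, hjlt⟩, hj', hjlt'⟩ := ha.exists_first_nonempty_block ha'.monotone hlt
  have hblock := (h j).2
  rw [if_pos hjlt, if_pos hjlt'] at hblock
  simp only [Option.some.injEq, Prod.mk.injEq] at hblock
  simp only [mem_ofPred_eq, suffix_apply_zero, suffix_suffix, add_comm 1, ← hj, ← hj'] at hw ⊢
  exact ⟨hblock.1 ▸ hw.1, hF.suffix_mem ha ha' (fun i => (h i).1) hjlt hjlt' hblock.2 hw.2⟩

end Recognizable

/-- The language of the words with a suffix in `Y` all of whose predecessors lie in `X`. -/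
def untilLanguage (X Y : Set (ℕ → Γ)) : Set (ℕ → Γ) :=
  {w | ∃ i, suffix w i ∈ Y ∧ ∀ j < i, suffix w j ∈ X}

theorem suffix_mem_untilLanguage {X Y : Set (ℕ → Γ)} {w : ℕ → Γ} {m : ℕ} :
    suffix w m ∈ untilLanguage X Y ↔
      ∃ p ≥ m, suffix w p ∈ Y ∧ ∀ q ∈ Ico m p, suffix w q ∈ X := by
  constructor
  · rintro ⟨i, hi, hlt⟩
    refine ⟨i + m, Nat.le_add_left m i, suffix_suffix w m i ▸ hi, fun q hq => ?_⟩
    obtain ⟨j, rfl⟩ := Nat.exists_eq_add_of_le' hq.1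
    exact suffix_suffix w m j ▸ hlt j (Nat.lt_of_add_lt_add_right hq.2)
  · rintro ⟨p, hp, hY, hX⟩
    obtain ⟨i, rfl⟩ := Nat.exists_eq_add_of_le' hp
    exact ⟨i, suffix_suffix w m i ▸ hY, fun j hj => suffix_suffix w m j ▸
      hX _ ⟨Nat.le_add_left m j, Nat.add_lt_add_right hj m⟩⟩

theorem Semiautomaton.Saturates.untilLanguage {F : Semiautomaton Γ C} {X Y : Set (ℕ → Γ)}
    (hX : F.Saturates X) (hY : F.Saturates Y) :
    F.suffixColours.Saturates (untilLanguage X Y) := by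
  intro w w' a a' ha ha' h
  simp only [F.colour_suffixColours _ (ha.monotone (Nat.le_succ _)),
    F.colour_suffixColours _ (ha'.monotone (Nat.le_succ _)), Prod.mk.injEq] at h
  simp only [suffix_mem_untilLanguage]
  rintro ⟨p, hp, hpY, hpX⟩
  have hblock : ∀ i, F.colour w (a i) (a (i + 1)) = F.colour w' (a' i) (a' (i + 1)) :=
    fun i => (h i).1
  obtain ⟨j, hj⟩ := ha.exists_block hp
  obtain ⟨p', hj', hpp'⟩ := (h j).2.2.subset (mem_image_of_mem _ hj)
  obtain ⟨hcolour, hbefore⟩ := Prod.mk.inj hpp'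
  refine ⟨p', (ha'.monotone j.zero_le).trans hj'.1,
    hY.suffix_mem ha ha' hblock hj.2.le hj'.2.le hcolour.symm hpY, fun q' hq' => ?_⟩
  obtain hlt | hle := lt_or_ge q' (a' j)
  · obtain ⟨i, hi'⟩ := ha'.exists_block hq'.1
    obtain ⟨q, hi, hqq'⟩ := (h i).2.1.superset (mem_image_of_mem _ hi')
    have hij : i < j := ha'.monotone.reflect_lt (hi'.1.trans_lt hlt)
    exact hX.suffix_mem ha ha' hblock hi.2.le hi'.2.le hqq' <|
      hpX q ⟨(ha.monotone i.zero_le).trans hi.1, hi.2.trans_le ((ha.monotone hij).trans hj.1)⟩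
  · obtain ⟨q, hq, hqq'⟩ := hbefore.subset (mem_image_of_mem _ ⟨hle, hq'.2⟩)
    exact hX.suffix_mem ha ha' hblock (hq.2.trans hj.2).le (hq'.2.trans hj'.2).le hqq' <|
      hpX q ⟨(ha.monotone j.zero_le).trans hq.1, hq.2⟩

/-- The subset construction for the projection that guesses the second components of the
letters. -/
def Semiautomaton.proj (F : Semiautomaton (Γ × B) C) : Semiautomaton Γ (Set C) where
  start := {F.start}
  step S l := image2 (fun c b => F.step c (l, b)) S univ

theorem Semiautomaton.colour_proj [Nonempty B] (F : Semiautomaton (Γ × B) C) (w : ℕ → Γ)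
    {m n : ℕ} (h : m ≤ n) :
    F.proj.colour w m n = range fun z : ℕ → B => F.colour (wordPair w z) m n := by
  refine colour_eq_of_step (g := fun n => range fun z : ℕ → B => F.colour (wordPair w z) m n)
    (by simp [proj]) (fun n hn => ?_) h
  refine Subset.antisymm (range_subset_iff.2 fun z => ?_) (image2_subset_iff.2 ?_)
  · exact ⟨_, mem_range_self z, z n, mem_univ _, (F.colour_succ (wordPair w z) hn).symm⟩
  · rintro _ ⟨z, rfl⟩ b -
    have hupdate : F.colour (wordPair w (Function.update z n b)) m n =
        F.colour (wordPair w z) m n :=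
      colour_congr fun i hi => by simp [wordPair, hi.2.ne]
    exact ⟨Function.update z n b, by simp [F.colour_succ _ hn, hupdate, wordPair]⟩

theorem Semiautomaton.Saturates.proj [Nonempty B] {F : Semiautomaton (Γ × B) C}
    {X : Set (ℕ → Γ × B)} (hF : F.Saturates X) :
    F.proj.Saturates {w | ∃ z, wordPair w z ∈ X} := by
  rintro w w' a a' ha ha' h ⟨z, hz⟩
  simp only [F.colour_proj _ (ha.monotone (Nat.le_succ _)),
    F.colour_proj _ (ha'.monotone (Nat.le_succ _))] at h
  have hshift : suffix (wordPair w fun n => z (n - a 0)) (a 0) ∈ X := by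
    convert hz using 1
    funext n
    simp [suffix, wordPair]
  choose y hy using fun i => (h i).subset (mem_range_self fun n => z (n - a 0))
  obtain ⟨z', hz'⟩ := exists_eqOn_blocks ha'.monotone y
  refine ⟨suffix z' (a' 0), hF (w' := wordPair w' z') ha ha' (fun i => ?_) hshift⟩
  rw [← hy i]
  exact colour_congr fun n hn => congrArg (w' n, ·) (hz' i hn).symm

namespace Recognizable

variable {X Y : Set (ℕ → Γ)}

protected theorem first (P : Γ → Prop) : Recognizable {w : ℕ → Γ | P (w 0)} := by
  simpa only [mem_univ, and_true] using Recognizable.univ.cons P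

protected theorem suffix (hX : Recognizable X) (i : ℕ) : Recognizable {w | suffix w i ∈ X} := by
  induction i with
  | zero => exact hX
  | succ i ih => simpa only [mem_ofPred_eq, suffix_suffix, true_and] using ih.cons fun _ => True

protected theorem untilLanguage (hX : Recognizable X) (hY : Recognizable Y) :
    Recognizable (untilLanguage X Y) := by
  have hXY : ∀ b, Recognizable (cond b Y X) := Bool.forall_bool.2 ⟨hX, hY⟩
  obtain ⟨C, hC, F, hF⟩ := exists_common hXY
  exact ⟨_, inferInstance, F.suffixColours, (hF false).untilLanguage (hF true)⟩

protected theorem always (hX : Recognizable X) : Recognizable {w | ∀ i, suffix w i ∈ X} := by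
  convert (Recognizable.univ.untilLanguage hX.compl).compl using 1
  ext w
  simp [untilLanguage]

protected theorem proj {X : Set (ℕ → Γ × B)} (hX : Recognizable X) :
    Recognizable {w | ∃ z, wordPair w z ∈ X} := by
  cases isEmpty_or_nonempty B
  · simpa only [IsEmpty.exists_iff, ofPred_false] using Recognizable.empty
  · obtain ⟨C, hC, F, hF⟩ := hX
    exact ⟨Set C, inferInstance, F.proj, hF.proj⟩

end Recognizable

/-! ### Eventually periodic words -/

/-- The eventually periodic words `u·v^ω`. -/
def EventuallyPeriodic (w : ℕ → Γ) : Prop := ∃ N c, 0 < c ∧ ∀ n, N ≤ n → w (n + c) = w n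

theorem apply_add_eq_of_dvd {w : ℕ → Γ} {N c d : ℕ} (h : ∀ n, N ≤ n → w (n + c) = w n)
    (hd : c ∣ d) (n : ℕ) (hn : N ≤ n) : w (n + d) = w n := by
  obtain ⟨l, rfl⟩ := hd
  induction l with
  | zero => rfl
  | succ l ih => rw [Nat.mul_succ, ← add_assoc, h _ (hn.trans (Nat.le_add_right _ _)), ih]

namespace EventuallyPeriodic

variable {w : ℕ → Γ} {z : ℕ → B}

protected theorem map (hw : EventuallyPeriodic w) (g : Γ → Γ') : EventuallyPeriodic (g ∘ w) :=
  let ⟨N, c, hc, h⟩ := hw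
  ⟨N, c, hc, fun n hn => congrArg g (h n hn)⟩

protected theorem wordPair (hw : EventuallyPeriodic w) (hz : EventuallyPeriodic z) :
    EventuallyPeriodic (wordPair w z) := by
  obtain ⟨N, c, hc, h⟩ := hw
  obtain ⟨N', c', hc', h'⟩ := hz
  exact ⟨max N N', c * c', Nat.mul_pos hc hc', fun n hn => Prod.ext
    (apply_add_eq_of_dvd h (Nat.dvd_mul_right c c') n (le_of_max_le_left hn))
    (apply_add_eq_of_dvd h' (Nat.dvd_mul_left c' c) n (le_of_max_le_right hn))⟩

end EventuallyPeriodic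

/-- The word that follows `w` up to position `m + d` and then repeats the letters from `m` on
forever. -/
def loopWord (w : ℕ → Γ) (m d : ℕ) : ℕ → Γ := fun n => if n < m then w n else w (m + (n - m) % d)

theorem loopWord_of_lt (w : ℕ → Γ) {m n : ℕ} (d : ℕ) (h : n < m) : loopWord w m d n = w n :=
  if_pos h

theorem loopWord_add_mul (w : ℕ → Γ) {m d n : ℕ} (hn : n ∈ Ico m (m + d)) (i : ℕ) :
    loopWord w m d (n + i * d) = w n := by
  have hsub : n + i * d - m = n - m + i * d := Nat.sub_add_comm hn.1
  rw [loopWord, if_neg (hn.1.trans (Nat.le_add_right _ _)).not_gt, hsub, Nat.add_mul_mod_self_right,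
    Nat.mod_eq_of_lt (Nat.sub_lt_left_of_lt_add hn.1 hn.2), Nat.add_sub_cancel' hn.1]

theorem loopWord_eq_self {w : ℕ → Γ} {m d : ℕ} (h : ∀ n, m ≤ n → w (n + d) = w n) :
    loopWord w m d = w := by
  have hper : Function.Periodic (fun n => w (m + n)) d := fun n => by
    simpa only [add_assoc] using h _ (Nat.le_add_right m n)
  funext n
  obtain hlt | hle := lt_or_ge n m
  · exact loopWord_of_lt w d hlt
  · rw [loopWord, if_neg hle.not_gt, hper.map_mod_nat, Nat.add_sub_cancel' hle]

theorem eventuallyPeriodic_loopWord (w : ℕ → Γ) (m : ℕ) {d : ℕ} (hd : 0 < d) :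
    EventuallyPeriodic (loopWord w m d) := by
  refine ⟨m, d, hd, fun n hn => ?_⟩
  rw [loopWord, loopWord, if_neg hn.not_gt, if_neg (hn.trans (Nat.le_add_right _ _)).not_gt,
    Nat.sub_add_comm hn, Nat.add_mod_right]

theorem loopWord_wordPair (w : ℕ → Γ) (z : ℕ → B) (m d : ℕ) :
    loopWord (wordPair w z) m d = wordPair (loopWord w m d) (loopWord z m d) := by
  funext n
  simp only [loopWord, wordPair]
  split_ifs <;> rfl

theorem exists_strictMono_forall_colour_eq [Finite C] (colour : ℕ → ℕ → C) :
    ∃ (e : C) (n : ℕ → ℕ), StrictMono n ∧ ∀ i, colour (n i) (n (i + 1)) = e := by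
  have hlim : ∀ f : ℕ → C, ∃ c, ∀ᶠ j in (Filter.hyperfilter ℕ : Filter ℕ), f j = c := fun f =>
    Ultrafilter.eventually_exists_iff.1 (.of_forall fun j => ⟨f j, rfl⟩)
  choose c hc using fun i => hlim (colour i)
  obtain ⟨e, he⟩ := hlim c
  have hnext : ∀ i : {i // c i = e}, ∃ j : {j // c j = e}, i.1 < j.1 ∧ colour i j = e := by
    rintro ⟨i, rfl⟩
    obtain ⟨j, ⟨hj, hij⟩, hlt⟩ := ((he.and (hc i)).and
      (Nat.hyperfilter_le_atTop (Filter.eventually_gt_atTop i))).exists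
    exact ⟨⟨j, hj⟩, hlt, hij⟩
  choose next hlt hcolour using hnext
  obtain ⟨i₀, hi₀⟩ := he.exists
  refine ⟨e, fun k => (next^[k] ⟨i₀, hi₀⟩).1, strictMono_nat_of_lt_succ fun k => ?_, fun k => ?_⟩
  · simpa only [Function.iterate_succ_apply'] using hlt _
  · simpa only [Function.iterate_succ_apply'] using hcolour _

theorem exists_homogeneous_cut [Finite C] (colour : ℕ → ℕ → C) {P : ℕ → Prop}
    (hP : ∃ᶠ n in Filter.atTop, P n) :
    ∃ (e : C) (a : ℕ → ℕ), StrictMono a ∧ a 0 = 0 ∧ (∀ i, P (a (i + 1))) ∧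
      ∀ i, colour (a (i + 1)) (a (i + 2)) = e := by
  obtain ⟨b, hb, hPb⟩ :=
    Filter.extraction_of_frequently_atTop (hP.and_eventually (Filter.eventually_gt_atTop 0))
  obtain ⟨e, n, hn, he⟩ := exists_strictMono_forall_colour_eq fun i j => colour (b i) (b j)
  refine ⟨e, fun | 0 => 0 | i + 1 => b (n i), strictMono_nat_of_lt_succ ?_, rfl,
    fun i => (hPb (n i)).1, he⟩
  rintro (_ | i)
  · exact (hPb (n 0)).2
  · exact hb (hn i.lt_succ_self)

theorem Semiautomaton.Saturates.loopWord_mem {F : Semiautomaton Γ C} {X : Set (ℕ → Γ)}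
    (hF : F.Saturates X) {w : ℕ → Γ} (hw : w ∈ X) {a : ℕ → ℕ} (ha : StrictMono a) (ha0 : a 0 = 0)
    {e : C} (he : ∀ i, F.colour w (a (i + 1)) (a (i + 2)) = e) :
    loopWord w (a 1) (a 2 - a 1) ∈ X := by
  have h12 : a 1 < a 2 := ha one_lt_two
  set d := a 2 - a 1
  have hsum : a 1 + d = a 2 := Nat.add_sub_cancel' h12.le
  let a' : ℕ → ℕ := fun | 0 => 0 | i + 1 => a 1 + i * d
  have ha' : StrictMono a' := strictMono_nat_of_lt_succ fun
    | 0 => by simpa [a', ha0] using ha zero_lt_one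
    | i + 1 => by simp only [a', Nat.succ_mul]; omega
  refine hF (w' := loopWord w (a 1) d) (.of_strictMono ha) (.of_strictMono ha') (fun
    | 0 => ?_
    | i + 1 => ?_) (by rwa [ha0])
  · simp only [a', ha0, zero_mul, add_zero]
    exact colour_congr fun n hn => (loopWord_of_lt w d hn.2).symm
  · have hnext : a' (i + 2) = a 2 + i * d := by simp only [a', Nat.succ_mul]; omega
    rw [he i, ← he 0, hnext, ← F.colour_suffix (loopWord w (a 1) d)]
    exact colour_congr fun n hn => (loopWord_add_mul w (hsum.symm ▸ hn) i).symm

theorem Recognizable.exists_eventuallyPeriodic_wordPair {X : Set (ℕ → Γ × B)} (hX : Recognizable X)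
    {w : ℕ → Γ} (hw : EventuallyPeriodic w) {z : ℕ → B} (hz : wordPair w z ∈ X) :
    ∃ z', EventuallyPeriodic z' ∧ wordPair w z' ∈ X := by
  obtain ⟨C, hC, F, hF⟩ := hX
  obtain ⟨N, c, hc, hper⟩ := hw
  obtain ⟨e, a, ha, ha0, hP, he⟩ := exists_homogeneous_cut (F.colour (wordPair w z))
    ((Nat.frequently_modEq hc.ne' 0).and_eventually (Filter.eventually_ge_atTop N))
  have hdvd : c ∣ a 2 - a 1 :=
    (Nat.modEq_iff_dvd' (ha one_lt_two).le).1 ((hP 0).1.trans (hP 1).1.symm)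
  have hloop : loopWord w (a 1) (a 2 - a 1) = w := loopWord_eq_self fun n hn =>
    apply_add_eq_of_dvd hper hdvd n ((hP 0).2.trans hn)
  refine ⟨loopWord z (a 1) (a 2 - a 1),
    eventuallyPeriodic_loopWord z _ (Nat.sub_pos_of_lt (ha one_lt_two)), ?_⟩
  simpa only [loopWord_wordPair, hloop] using hF.loopWord_mem hz ha ha0 he

theorem Recognizable.exists_eventuallyPeriodic {X : Set (ℕ → Γ)} (hX : Recognizable X)
    (hne : X.Nonempty) : ∃ w ∈ X, EventuallyPeriodic w :=
  let ⟨_, hw⟩ := hne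
  let ⟨z, hz, hzX⟩ := (hX.comap (Prod.snd : Unit × Γ → Γ)).exists_eventuallyPeriodic_wordPair
    (w := fun _ => ()) ⟨0, 1, one_pos, fun _ _ => rfl⟩ hw
  ⟨z, hzX, hz⟩

/-! ### Büchi automata for recognizable languages -/

namespace Semiautomaton

/-- `w` factorizes into nonempty blocks, the first of colour `s` and the later ones of
colour `e`. -/
def Factors (F : Semiautomaton Γ C) (s e : C) (w : ℕ → Γ) : Prop :=
  ∃ a : ℕ → ℕ, StrictMono a ∧ a 0 = 0 ∧ F.colour w 0 (a 1) = s ∧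
    ∀ i, F.colour w (a (i + 1)) (a (i + 2)) = e

theorem exists_factors [Finite C] (F : Semiautomaton Γ C) (w : ℕ → Γ) :
    ∃ s e, F.Factors s e w :=
  let ⟨e, a, ha, ha0, _, he⟩ :=
    exists_homogeneous_cut (F.colour w) (Filter.frequently_true_iff_neBot _ |>.2 inferInstance)
  ⟨_, e, a, ha, ha0, rfl, he⟩

theorem Saturates.mem_of_factors {F : Semiautomaton Γ C} {X : Set (ℕ → Γ)} (hF : F.Saturates X)
    {s e : C} {w w' : ℕ → Γ} (hw : F.Factors s e w) (hw' : F.Factors s e w') (hX : w ∈ X) :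
    w' ∈ X := by
  obtain ⟨a, ha, ha0, hs, he⟩ := hw
  obtain ⟨a', ha', ha0', hs', he'⟩ := hw'
  have hcolour : ∀ i, F.colour w (a i) (a (i + 1)) = F.colour w' (a' i) (a' (i + 1)) := fun
    | 0 => by simp only [ha0, ha0', zero_add, hs, hs']
    | i + 1 => (he i).trans (he' i).symm
  have := hF (.of_strictMono ha) (.of_strictMono ha') hcolour
  rw [ha0, ha0'] at this
  exact this hX

section BlockNBA

variable {Γ C : Type} [Finite C]

/-- The automaton that guesses a pair `(s, e)` in `R` together with a factorization witnessing
`F.Factors s e w`. A state consists of the colour required of the current block, the colour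
required of the later blocks, the colour of the part of the current block read so far, and a
flag telling whether the current block starts here. -/
def blockNBA (F : Semiautomaton Γ C) (R : Set (C × C)) : NBA Γ where
  Q := C × C × C × Bool
  finQ := Fintype.ofFinite _
  init := {q | (q.1, q.2.1) ∈ R ∧ q.2.2 = (F.start, true)}
  δ := fun (t, e, c, _) l =>
    {q | q = (t, e, F.step c l, false) ∨ F.step c l = t ∧ q = (e, e, F.start, true)}
  acc := {q | q.2.2.2 = true}

variable {F : Semiautomaton Γ C} {R : Set (C × C)} {w : ℕ → Γ}

theorem Factors.blockNBA_accepts {s e : C} (hR : (s, e) ∈ R) (hw : F.Factors s e w) :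
    (F.blockNBA R).Accepts w := by
  obtain ⟨a, ha, ha0, hs, he⟩ := hw
  let target : ℕ → C := fun | 0 => s | _ + 1 => e
  have htarget : ∀ i, F.colour w (a i) (a (i + 1)) = target i := fun
    | 0 => by rw [ha0, zero_add, hs]
    | i + 1 => he i
  obtain ⟨r, hr⟩ := exists_eqOn_blocks ha.monotone fun i n =>
    (target i, e, F.colour w (a i) n, decide (n = a i))
  have hstart : ∀ i, r (a i) = (target i, e, F.start, true) := fun i => by
    simpa using hr i ⟨le_rfl, ha i.lt_succ_self⟩
  refine ⟨r, ?_, fun n => ?_, fun N => ⟨a N, ha.id_le N, by rw [hstart]; rfl⟩⟩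
  · have h0 := hstart 0
    rw [ha0] at h0
    exact h0 ▸ ⟨hR, rfl⟩
  · obtain ⟨i, hi⟩ := (IsCut.of_strictMono ha).exists_block (ha0.trans_le n.zero_le)
    have hstep := F.colour_succ w hi.1
    rw [hr i hi]
    obtain hlt | heq := (Nat.succ_le_of_lt hi.2).lt_or_eq
    · left
      rw [hr i ⟨Nat.le_succ_of_le hi.1, hlt⟩]
      simp [hstep, (Nat.lt_succ_of_le hi.1).ne']
    · right
      rw [← hstep, show n + 1 = a (i + 1) from heq, hstart]
      exact ⟨htarget i, rfl⟩

theorem blockNBA_run_in_block {r : ℕ → (F.blockNBA R).Q}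
    (hrun : ∀ n, r (n + 1) ∈ (F.blockNBA R).δ (r n) (w n)) {m n : ℕ} (hmn : m ≤ n) {t e : C}
    (hm : r m = (t, e, F.start, true)) (hn : ∀ i ∈ Ioc m n, r i ∉ (F.blockNBA R).acc) :
    ∃ b, r n = (t, e, F.colour w m n, b) := by
  induction n, hmn using Nat.le_induction with
  | base => exact ⟨true, by rw [hm, F.colour_self]⟩
  | succ n hmn ih =>
    obtain ⟨b, hb⟩ := ih fun i hi => hn i ⟨hi.1, Nat.le_succ_of_le hi.2⟩
    have hnext := hb ▸ hrun n
    obtain hstep | ⟨-, hmark⟩ := hnext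
    · exact ⟨false, hstep.trans (by rw [F.colour_succ w hmn])⟩
    · exact absurd (hmark ▸ rfl) (hn _ ⟨Nat.lt_succ_of_le hmn, le_rfl⟩)

theorem blockNBA_run_next_block {r : ℕ → (F.blockNBA R).Q}
    (hrun : ∀ n, r (n + 1) ∈ (F.blockNBA R).δ (r n) (w n)) {m n : ℕ} (hmn : m < n) {t e : C}
    (hm : r m = (t, e, F.start, true)) (hn : r n ∈ (F.blockNBA R).acc)
    (hbetween : ∀ i ∈ Ioo m n, r i ∉ (F.blockNBA R).acc) :
    F.colour w m n = t ∧ r n = (e, e, F.start, true) := by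
  obtain ⟨n, rfl⟩ := Nat.exists_eq_add_one_of_ne_zero (Nat.ne_zero_of_lt hmn)
  have hmn' : m ≤ n := Nat.le_of_lt_succ hmn
  obtain ⟨b, hb⟩ := blockNBA_run_in_block hrun hmn' hm fun i hi =>
    hbetween i ⟨hi.1, Nat.lt_succ_of_le hi.2⟩
  have hnext := hb ▸ hrun n
  obtain hstep | ⟨hcolour, hmark⟩ := hnext
  · rw [hstep] at hn
    exact absurd hn Bool.false_ne_true
  · exact ⟨(F.colour_succ w hmn').trans hcolour, hmark⟩

theorem exists_factors_of_blockNBA_accepts (hw : (F.blockNBA R).Accepts w) :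
    ∃ s e, (s, e) ∈ R ∧ F.Factors s e w := by
  obtain ⟨r, ⟨hR, hr0⟩, hrun, hacc⟩ := hw
  have hinf : {n | r n ∈ (F.blockNBA R).acc}.Infinite :=
    Nat.frequently_atTop_iff_infinite.1 (Filter.frequently_atTop.2 hacc)
  have h0 : r 0 ∈ (F.blockNBA R).acc := congrArg Prod.snd hr0
  let a := Nat.nth (r · ∈ (F.blockNBA R).acc)
  have ha : StrictMono a := Nat.nth_strictMono hinf
  have ha0 : a 0 = 0 := Nat.nth_zero_of_zero h0
  have hnext : ∀ i {t e}, r (a i) = (t, e, F.start, true) →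
      F.colour w (a i) (a (i + 1)) = t ∧ r (a (i + 1)) = (e, e, F.start, true) := fun i _ _ hi =>
    blockNBA_run_next_block hrun (ha i.lt_succ_self) hi (Nat.nth_mem_of_infinite hinf _)
      fun k hk hk' => (Nat.le_nth_of_lt_nth_succ hk.2 hk').not_gt hk.1
  have hr : r (a 0) = ((r 0).1, (r 0).2.1, F.start, true) := by rw [ha0, ← hr0]; rfl
  obtain ⟨hs, h1⟩ := hnext 0 hr
  have hlater : ∀ i, r (a (i + 1)) = ((r 0).2.1, (r 0).2.1, F.start, true) := fun i =>
    Nat.rec h1 (fun i ih => (hnext (i + 1) ih).2) i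
  rw [ha0] at hs
  exact ⟨_, _, hR, a, ha, ha0, hs, fun i => (hnext (i + 1) (hlater i)).1⟩

theorem blockNBA_accepts_iff :
    (F.blockNBA R).Accepts w ↔ ∃ s e, (s, e) ∈ R ∧ F.Factors s e w :=
  ⟨exists_factors_of_blockNBA_accepts, fun ⟨_, _, hR, hw⟩ => hw.blockNBA_accepts hR⟩

end BlockNBA

end Semiautomaton

theorem Recognizable.exists_nba {Γ : Type} {X : Set (ℕ → Γ)} (hX : Recognizable X) :
    ∃ A : NBA Γ, ∀ w, A.Accepts w ↔ w ∈ X := by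
  obtain ⟨C, hC, F, hF⟩ := hX
  refine ⟨F.blockNBA {d | ∃ w ∈ X, F.Factors d.1 d.2 w}, fun w => ?_⟩
  rw [Semiautomaton.blockNBA_accepts_iff]
  constructor
  · rintro ⟨s, e, ⟨u, hu, hfactors⟩, hw⟩
    exact hF.mem_of_factors hfactors hw hu
  · intro hw
    obtain ⟨s, e, hfactors⟩ := F.exists_factors w
    exact ⟨s, e, ⟨w, hw, hfactors⟩, hfactors⟩

/-! ### Separation of values by recognizable languages -/

/-- The set `X` compares `f` with the threshold `v` at the points of `P`, up to strictness: it
contains those of value above `v` and omits those of value below `v`. -/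
def SeparatesOn {α : Type*} (P X : Set α) (v : ℝ) (f : α → ℝ) : Prop :=
  ∀ w ∈ P, (v < f w → w ∈ X) ∧ (w ∈ X → v ≤ f w)

namespace SeparatesOn

variable {α β ι : Type*} {P X : Set α} {v : ℝ} {f : α → ℝ}

theorem const_sub (c : ℝ) (h : SeparatesOn P X (c - v) f) :
    SeparatesOn P Xᶜ v fun w => c - f w := fun w hw =>
  ⟨fun hv hX => ((h w hw).2 hX).not_gt (lt_sub_comm.1 hv),
    fun hX => le_sub_comm.1 (not_lt.1 fun hlt => hX ((h w hw).1 hlt))⟩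

theorem congr {X' : Set α} (h : SeparatesOn P X v f) (hX : ∀ w ∈ P, w ∈ X ↔ w ∈ X') :
    SeparatesOn P X' v f := fun w hw => by
  rw [← hX w hw]
  exact h w hw

theorem sSup_image {Q Y : Set β} {g : β → ℝ} (h : SeparatesOn Q Y v g) (hg : BddAbove (range g))
    {T : Set ι} (hT : T.Nonempty) {e : α → ι → β} (he : ∀ w ∈ P, ∀ t ∈ T, e w t ∈ Q) :
    SeparatesOn P {w | ∃ t ∈ T, e w t ∈ Y} v fun w => sSup ((fun t => g (e w t)) '' T) := by
  refine fun w hw => ⟨fun hv => ?_, fun ⟨t, ht, hY⟩ => ?_⟩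
  · obtain ⟨_, ⟨t, ht, rfl⟩, hlt⟩ := exists_lt_of_lt_csSup (hT.image _) hv
    exact ⟨t, ht, (h _ (he w hw t ht)).1 hlt⟩
  · exact le_csSup_of_le (hg.mono (image_subset_iff.2 fun t _ => mem_range_self (e w t)))
      (mem_image_of_mem _ ht) ((h _ (he w hw t ht)).2 hY)

end SeparatesOn

/-- The values of `f` can be compared with the threshold `v`, up to strictness, by a recognizable
language. -/
def Separable (f : (ℕ → Γ) → ℝ) (v : ℝ) : Prop :=
  ∃ X, Recognizable X ∧ SeparatesOn univ X v f

namespace Separable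

variable {f g : (ℕ → Γ) → ℝ} {v : ℝ}

theorem const (c v : ℝ) : Separable (fun _ : ℕ → Γ => c) v := by
  obtain h | h := le_or_gt v c
  · exact ⟨univ, .univ, fun _ _ => ⟨fun _ => mem_univ _, fun _ => h⟩⟩
  · exact ⟨∅, .empty, fun _ _ => ⟨fun h' => (h.not_gt h').elim, False.elim⟩⟩

theorem of_mem_Ioo (hf : ∀ w, f w ∈ Icc (0 : ℝ) 1) (h : 0 < v → v < 1 → Separable f v) :
    Separable f v := by
  obtain h0 | h0 := le_or_gt v 0
  · exact ⟨univ, .univ, fun w _ => ⟨fun _ => mem_univ w, fun _ => h0.trans (hf w).1⟩⟩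
  obtain h1 | h1 := le_or_gt 1 v
  · exact ⟨∅, .empty, fun w _ => ⟨fun h => ((h1.trans_lt h).not_ge (hf w).2).elim, False.elim⟩⟩
  exact h h0 h1

theorem const_sub (c : ℝ) (hf : Separable f (c - v)) : Separable (fun w => c - f w) v :=
  let ⟨_, hX, h⟩ := hf
  ⟨_, hX.compl, h.const_sub c⟩

protected theorem max (hf : Separable f v) (hg : Separable g v) :
    Separable (fun w => max (f w) (g w)) v := by
  obtain ⟨X, hX, h⟩ := hf
  obtain ⟨Y, hY, h'⟩ := hg
  exact ⟨X ∪ Y, hX.union hY, fun w hw =>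
    ⟨fun hv => (lt_max_iff.1 hv).imp (h w hw).1 (h' w hw).1,
      fun hXY => le_max_iff.2 (hXY.imp (h w hw).2 (h' w hw).2)⟩⟩

protected theorem suffix (hf : Separable f v) (i : ℕ) : Separable (fun w => f (suffix w i)) v :=
  let ⟨_, hX, h⟩ := hf
  ⟨_, hX.suffix i, fun w _ => h (suffix w i) (mem_univ _)⟩

theorem const_mul {c : ℝ} (hc : 0 ≤ c) (hf : ∀ v, Separable f v) :
    Separable (fun w => c * f w) v := by
  obtain rfl | hc := hc.eq_or_lt
  · simpa only [zero_mul] using const 0 v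
  · obtain ⟨X, hX, h⟩ := hf (v / c)
    exact ⟨X, hX, fun w hw => ⟨fun hv => (h w hw).1 ((div_lt_iff₀' hc).2 hv),
      fun hwX => (div_le_iff₀' hc).1 ((h w hw).2 hwX)⟩⟩

end Separable

/-! ### Until operators -/

theorem lt_of_lt_prefMin {g : ℕ → ℝ} {v : ℝ} {i : ℕ} (h : v < prefMin g i) {j : ℕ} (hj : j < i) :
    v < g j := by
  induction i with
  | zero => exact absurd hj j.not_lt_zero
  | succ i ih =>
    obtain ⟨hpref, hlast⟩ := lt_min_iff.1 h
    obtain hj | rfl := Nat.lt_succ_iff_lt_or_eq.1 hj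
    exacts [ih hpref hj, hlast]

theorem le_prefMin {g : ℕ → ℝ} {v : ℝ} {i : ℕ} (hv : v ≤ 1) (h : ∀ j < i, v ≤ g j) :
    v ≤ prefMin g i := by
  induction i with
  | zero => exact hv
  | succ i ih => exact le_min (ih fun j hj => h j (Nat.lt_succ_of_lt hj)) (h i i.lt_succ_self)

/-- The value `sup_i min (f i) (min_{j < i} g j)` of an until operator whose right argument has
the values `f` and whose left argument has the values `g`; for `U_η` the values are those
discounted by `η`. -/
def untilValue (g f : ℕ → ℝ) : ℝ := ⨆ i, min (f i) (prefMin g i)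

theorem le_untilValue {g f : ℕ → ℝ} {v : ℝ} (hf : ∀ i, f i ≤ 1) (hv : v ≤ 1) {i : ℕ}
    (hi : v ≤ f i) (hj : ∀ j < i, v ≤ g j) : v ≤ untilValue g f :=
  le_ciSup_of_le ⟨1, forall_mem_range.2 fun i => min_le_of_left_le (hf i)⟩ i
    (le_min hi (le_prefMin hv hj))

theorem exists_of_lt_untilValue {g f : ℕ → ℝ} {v : ℝ} (h : v < untilValue g f) :
    ∃ i, v < f i ∧ ∀ j < i, v < g j :=
  let ⟨i, hi⟩ := exists_lt_of_lt_ciSup h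
  ⟨i, (lt_min_iff.1 hi).1, fun _ => lt_of_lt_prefMin (lt_min_iff.1 hi).2⟩

theorem untilValue_mem_Icc {g f : ℕ → ℝ} (hf : ∀ i, f i ∈ Icc (0 : ℝ) 1) :
    untilValue g f ∈ Icc (0 : ℝ) 1 :=
  ⟨le_untilValue (fun i => (hf i).2) zero_le_one (hf 0).1 fun j hj => absurd hj j.not_lt_zero,
    ciSup_le fun i => min_le_of_left_le (hf i).2⟩

namespace Separable

variable {f g : (ℕ → Γ) → ℝ} {v : ℝ}

protected theorem untilValue (hf01 : ∀ w, f w ∈ Icc (0 : ℝ) 1) (hg : Separable g v)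
    (hf : Separable f v) :
    Separable (fun w => untilValue (fun j => g (suffix w j)) fun i => f (suffix w i)) v := by
  refine of_mem_Ioo (fun w => untilValue_mem_Icc fun i => hf01 _) fun _ hv1 => ?_
  obtain ⟨X, hX, hXg⟩ := hg
  obtain ⟨Y, hY, hYf⟩ := hf
  refine ⟨untilLanguage X Y, hX.untilLanguage hY, fun w _ => ⟨fun hv => ?_, ?_⟩⟩
  · obtain ⟨i, hi, hj⟩ := exists_of_lt_untilValue hv
    exact ⟨i, (hYf _ trivial).1 hi, fun j hji => (hXg _ trivial).1 (hj j hji)⟩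
  · rintro ⟨i, hi, hj⟩
    exact le_untilValue (fun i => (hf01 _).2) hv1.le ((hYf _ trivial).2 hi) fun j hji =>
      (hXg _ trivial).2 (hj j hji)

/-- Only the finitely many positions whose discount factor is at least `v` can contribute a value
above `v`. -/
theorem untilValue_discounted {η : ℕ → ℝ} (hη01 : ∀ i, η i ∈ Icc (0 : ℝ) 1)
    (hη : Filter.Tendsto η Filter.atTop (nhds 0)) (hf01 : ∀ w, f w ∈ Icc (0 : ℝ) 1)
    (hg : ∀ v, Separable g v) (hf : ∀ v, Separable f v) :
    Separable (fun w => untilValue (fun j => η j * g (suffix w j))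
      fun i => η i * f (suffix w i)) v := by
  have hterm01 : ∀ w i, η i * f (suffix w i) ∈ Icc (0 : ℝ) 1 := fun w i =>
    unitInterval.mul_mem (hη01 i) (hf01 _)
  refine of_mem_Ioo (fun w => untilValue_mem_Icc (hterm01 w)) fun hv0 hv1 => ?_
  have hterm : ∀ {h : (ℕ → Γ) → ℝ}, (∀ v, Separable h v) →
      ∀ i, Separable (fun w => η i * h (suffix w i)) v := fun hh i =>
    const_mul (hη01 i).1 fun v => (hh v).suffix i
  choose X hX hXg using hterm hg
  choose Y hY hYf using hterm hf
  obtain ⟨N, hN⟩ := Filter.eventually_atTop.1 (hη.eventually (gt_mem_nhds hv0))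
  refine ⟨⋃ i : Fin N, Y i ∩ ⋂ j : Fin i, X j,
    .iUnion fun i => (hY i).inter (.iInter fun j => hX j),
    fun w hw => ⟨fun hv => ?_, fun hwXY => ?_⟩⟩
  · obtain ⟨i, hi, hj⟩ := exists_of_lt_untilValue hv
    have hiN : i < N := lt_of_not_ge fun hle =>
      ((mul_le_of_le_one_right (hη01 i).1 (hf01 _).2).trans_lt (hN i hle)).not_gt hi
    exact mem_iUnion.2 ⟨⟨i, hiN⟩, (hYf i w hw).1 hi, mem_iInter.2 fun j =>
      (hXg j w hw).1 (hj j j.2)⟩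
  · obtain ⟨i, hi, hj⟩ := mem_iUnion.1 hwXY
    exact le_untilValue (fun i => (hterm01 w i).2) hv1.le ((hYf i w hw).2 hi) fun j hji =>
      (hXg j w hw).2 (mem_iInter.1 hj ⟨j, hji⟩)

end Separable

/-! ### Quantifier-free formulas -/

theorem tsemQF_mem_Icc {η : D → ℕ → ℝ} (hη : ∀ d i, η d i ∈ Icc (0 : ℝ) 1) (φ : TQF AP Var D)
    (ρ : Var → Trace AP) (T : Set (Trace AP)) : tsemQF η φ ρ T ∈ Icc (0 : ℝ) 1 := by
  induction φ generalizing ρ with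
  | atom p π => exact (ρ π 0 p).2
  | neg φ ih => exact Icc.one_sub_mem (ih ρ)
  | or φ₁ φ₂ ih₁ ih₂ => exact ⟨le_max_of_le_left (ih₁ ρ).1, max_le (ih₁ ρ).2 (ih₂ ρ).2⟩
  | next _ ih => exact ih _
  | untl φ₁ φ₂ _ ih₂ => exact untilValue_mem_Icc fun i => ih₂ _
  | untlD d φ₁ φ₂ _ ih₂ => exact untilValue_mem_Icc fun i => unitInterval.mul_mem (hη d i) (ih₂ _)

theorem tsemQF_congr (η : D → ℕ → ℝ) (φ : TQF AP Var D) {ρ ρ' : Var → Trace AP}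
    (T T' : Set (Trace AP)) (h : EqOn ρ ρ' (varsTQF φ)) :
    tsemQF η φ ρ T = tsemQF η φ ρ' T' := by
  have hshift : ∀ {s : Set Var} {ρ ρ' : Var → Trace AP}, EqOn ρ ρ' s →
      ∀ i, EqOn (shiftA ρ i) (shiftA ρ' i) s := fun h i x hx => congrArg (suffix · i) (h hx)
  induction φ generalizing ρ ρ' with
  | atom p π => simp only [tsemQF, h (mem_singleton π)]
  | neg φ ih => simp only [tsemQF, ih h]
  | or φ₁ φ₂ ih₁ ih₂ =>
    simp only [tsemQF, ih₁ (h.mono subset_union_left), ih₂ (h.mono subset_union_right)]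
  | next φ ih => exact ih (hshift h 1)
  | untl φ₁ φ₂ ih₁ ih₂ | untlD d φ₁ φ₂ ih₁ ih₂ =>
    simp only [tsemQF, fun i => ih₁ (hshift (h.mono subset_union_left) i),
      fun i => ih₂ (hshift (h.mono subset_union_right) i)]

/-- The trace assignment encoded by a word whose letters are valuations of all variables. -/
def assignOf (w : ℕ → Var → AP → unitInterval) : Var → Trace AP := fun x n => w n x

theorem separable_tsemQF {η : D → ℕ → ℝ} (hη01 : ∀ d i, η d i ∈ Icc (0 : ℝ) 1)
    (hη : ∀ d, Filter.Tendsto (η d) Filter.atTop (nhds 0)) (φ : TQF AP Var D)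
    (T : Set (Trace AP)) (v : ℝ) : Separable (fun w => tsemQF η φ (assignOf w) T) v := by
  induction φ generalizing v with
  | atom p π =>
    exact ⟨_, .first fun l : Var → AP → unitInterval => v < l π p, fun _ _ =>
      ⟨id, fun h => le_of_lt h⟩⟩
  | neg φ ih => exact (ih _).const_sub 1
  | or φ₁ φ₂ ih₁ ih₂ => exact (ih₁ v).max (ih₂ v)
  | next φ ih => exact (ih v).suffix 1
  | untl φ₁ φ₂ ih₁ ih₂ =>
    exact .untilValue (fun w => tsemQF_mem_Icc hη01 φ₂ (assignOf w) T) (ih₁ v) (ih₂ v)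
  | untlD d φ₁ φ₂ ih₁ ih₂ =>
    exact .untilValue_discounted (hη01 d) (hη d)
      (fun w => tsemQF_mem_Icc hη01 φ₂ (assignOf w) T) ih₁ ih₂

/-! ### Quantifiers -/

/-- A single recognizable language compares both the values of `f` and, on eventually periodic
words, the values of `g` with the threshold `v`. Here `f` and `g` stand for the values of a
formula over a set of traces and over its lassos. -/
def LassoSeparable (f g : (ℕ → Γ) → ℝ) (v : ℝ) : Prop :=
  ∃ X, Recognizable X ∧ SeparatesOn univ X v f ∧ SeparatesOn {w | EventuallyPeriodic w} X v g

theorem Separable.lassoSeparable {f : (ℕ → Γ) → ℝ} {v : ℝ} (hf : Separable f v) :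
    LassoSeparable f f v :=
  let ⟨X, hX, h⟩ := hf
  ⟨X, hX, h, fun w _ => h w (mem_univ w)⟩

namespace LassoSeparable

variable {f g : (ℕ → Γ) → ℝ} {v : ℝ}

theorem const_sub (c : ℝ) (h : LassoSeparable f g (c - v)) :
    LassoSeparable (fun w => c - f w) (fun w => c - g w) v :=
  let ⟨_, hX, hf, hg⟩ := h
  ⟨_, hX.compl, hf.const_sub c, hg.const_sub c⟩

/-- An eventually periodic word over which the witness ranges over all of `T` has an eventually
periodic witness as well, so the same language serves for the supremum over the lassos in `T`. -/
protected theorem sSup (h : LassoSeparable f g v) (hf : BddAbove (range f))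
    (hg : BddAbove (range g)) {T : Set (ℕ → B)} (hT : Recognizable T) (u : Γ' × B → Γ) :
    LassoSeparable (fun w => sSup ((fun t => f (u ∘ wordPair w t)) '' T))
      (fun w => sSup ((fun t => g (u ∘ wordPair w t)) '' {t ∈ T | EventuallyPeriodic t})) v := by
  obtain rfl | hne := T.eq_empty_or_nonempty
  · simpa using (Separable.const (Γ := Γ') 0 v).lassoSeparable
  obtain ⟨X, hX, hXf, hXg⟩ := h
  have hpairs : Recognizable {x : ℕ → Γ' × B | Prod.snd ∘ x ∈ T ∧ u ∘ x ∈ X} :=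
    (hT.comap Prod.snd).inter (hX.comap u)
  refine ⟨_, hpairs.proj, hXf.sSup_image hf hne fun _ _ _ _ => mem_univ _, ?_⟩
  have hlasso := hXg.sSup_image hg (hT.exists_eventuallyPeriodic hne)
    (P := {w | EventuallyPeriodic w}) (e := fun w t => u ∘ wordPair w t) fun w hw t ht =>
      (EventuallyPeriodic.wordPair hw ht.2).map u
  refine hlasso.congr fun w hw => ⟨fun ⟨t, ht, htX⟩ => ⟨t, ht.1, htX⟩, fun ⟨t, ht⟩ => ?_⟩
  obtain ⟨t', ht', ht'T, ht'X⟩ := hpairs.exists_eventuallyPeriodic_wordPair hw ht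
  exact ⟨t', ⟨ht'T, ht'⟩, ht'X⟩

protected theorem sInf (h : LassoSeparable f g v) (hf : BddBelow (range f))
    (hg : BddBelow (range g)) {T : Set (ℕ → B)} (hT : Recognizable T) (u : Γ' × B → Γ) :
    LassoSeparable (fun w => sInf ((fun t => f (u ∘ wordPair w t)) '' T))
      (fun w => sInf ((fun t => g (u ∘ wordPair w t)) '' {t ∈ T | EventuallyPeriodic t})) v := by
  have hneg : LassoSeparable (fun w => 0 - f w) (fun w => 0 - g w) (0 - v) :=
    const_sub 0 (by simpa using h)
  have hbdd : ∀ {k : (ℕ → Γ) → ℝ}, BddBelow (range k) → BddAbove (range fun w => 0 - k w) :=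
    fun ⟨c, hc⟩ => ⟨0 - c, forall_mem_range.2 fun w => sub_le_sub_left (hc (mem_range_self w)) 0⟩
  have := (hneg.sSup (hbdd hf) (hbdd hg) hT u).const_sub 0
  simpa [Real.sInf_def, ← image_neg_eq_neg, image_image] using this

end LassoSeparable

theorem tsem_mem_Icc [DecidableEq Var] {η : D → ℕ → ℝ} (hη : ∀ d i, η d i ∈ Icc (0 : ℝ) 1)
    (ψ : TForm AP Var D) (ρ : Var → Trace AP) (T : Set (Trace AP)) :
    tsem η ψ ρ T ∈ Icc (0 : ℝ) 1 := by
  induction ψ generalizing ρ with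
  | qf φ => exact tsemQF_mem_Icc hη φ ρ T
  | ex π ψ ih =>
    exact ⟨Real.sSup_nonneg (forall_mem_image.2 fun t _ => (ih _).1),
      Real.sSup_le (forall_mem_image.2 fun t _ => (ih _).2) zero_le_one⟩
  | all π ψ ih =>
    refine ⟨Real.sInf_nonneg (forall_mem_image.2 fun t _ => (ih _).1), ?_⟩
    obtain rfl | ⟨t, ht⟩ := T.eq_empty_or_nonempty
    · simp [tsem]
    · exact csInf_le_of_le ⟨0, forall_mem_image.2 fun t _ => (ih _).1⟩ (mem_image_of_mem _ ht)
        (ih _).2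

theorem tsem_congr [DecidableEq Var] (η : D → ℕ → ℝ) (ψ : TForm AP Var D)
    {ρ ρ' : Var → Trace AP} (T : Set (Trace AP)) (h : EqOn ρ ρ' (freeVars ψ)) :
    tsem η ψ ρ T = tsem η ψ ρ' T := by
  have hupdate : ∀ {s : Set Var} {ρ ρ' : Var → Trace AP} {π : Var}, EqOn ρ ρ' (s \ {π}) →
      ∀ t, EqOn (Function.update ρ π t) (Function.update ρ' π t) s := by
    intro s ρ ρ' π h t x hx
    obtain rfl | hxπ := eq_or_ne x π
    · simp only [Function.update_self]
    · simp only [Function.update_of_ne hxπ, h ⟨hx, hxπ⟩]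
  induction ψ generalizing ρ ρ' with
  | qf φ => exact tsemQF_congr η φ T T h
  | ex π ψ ih | all π ψ ih => simp only [tsem, fun t => ih (hupdate h t)]

theorem assignOf_comp_wordPair [DecidableEq Var] (w : ℕ → Var → AP → unitInterval) (π : Var)
    (t : Trace AP) :
    assignOf ((fun l : (Var → AP → unitInterval) × (AP → unitInterval) =>
      Function.update l.1 π l.2) ∘ wordPair w t) = Function.update (assignOf w) π t := by
  funext x n
  obtain rfl | hx := eq_or_ne x π
  · simp [assignOf, wordPair]
  · simp [assignOf, wordPair, hx]

theorem isLasso_iff_eventuallyPeriodic {t : Trace AP} : IsLasso t ↔ EventuallyPeriodic t := Iff.rfl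

theorem lassoSeparable_tsem [DecidableEq Var] {η : D → ℕ → ℝ}
    (hη01 : ∀ d i, η d i ∈ Icc (0 : ℝ) 1)
    (hη : ∀ d, Filter.Tendsto (η d) Filter.atTop (nhds 0)) {T : Set (Trace AP)}
    (hT : Recognizable T) (ψ : TForm AP Var D) (v : ℝ) :
    LassoSeparable (fun w => tsem η ψ (assignOf w) T)
      (fun w => tsem η ψ (assignOf w) {t ∈ T | IsLasso t}) v := by
  have hmem := fun ψ T (w : ℕ → Var → AP → unitInterval) => tsem_mem_Icc hη01 ψ (assignOf w) T
  have habove := fun ψ T => (⟨1, forall_mem_range.2 fun w => (hmem ψ T w).2⟩ : BddAbove (range _))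
  have hbelow := fun ψ T => (⟨0, forall_mem_range.2 fun w => (hmem ψ T w).1⟩ : BddBelow (range _))
  induction ψ with
  | qf φ =>
    simpa only [tsem, tsemQF_congr η φ {t ∈ T | IsLasso t} T (eqOn_refl _ _)] using
      (separable_tsemQF hη01 hη φ T v).lassoSeparable
  | ex π ψ ih =>
    simpa only [tsem, assignOf_comp_wordPair, isLasso_iff_eventuallyPeriodic] using
      ih.sSup (habove _ _) (habove _ _) hT fun l => Function.update l.1 π l.2
  | all π ψ ih =>
    simpa only [tsem, assignOf_comp_wordPair, isLasso_iff_eventuallyPeriodic] using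
      ih.sInf (hbelow _ _) (hbelow _ _) hT fun l => Function.update l.1 π l.2

/-! ### Trace assignments and Kripke structures -/

/-- The valuation of all variables encoded by a letter over `AP × Fin k`; variables outside the
range of `vs` receive weight `0`. -/
def decodeLetter {k : ℕ} (vs : Fin k → Var) (l : AP × Fin k → unitInterval) :
    Var → AP → unitInterval :=
  Function.extend vs (fun i p => l (p, i)) 0

theorem assignOf_decodeLetter_encode {k : ℕ} {vs : Fin k → Var} {ts : Fin k → Trace AP}
    {ρ : Var → Trace AP} (hρ : ∀ i, ρ (vs i) = ts i) (i : Fin k) :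
    assignOf (decodeLetter vs ∘ encode ts) (vs i) = ρ (vs i) := by
  funext n
  have hfactors : Function.FactorsThrough (fun i p => encode ts n (p, i)) vs := fun i j hij =>
    congrFun ((hρ i).symm.trans ((congrArg ρ hij).trans (hρ j))) n
  exact (hfactors.extend_apply 0 i).trans (congrFun (hρ i).symm n)

/-- The initial paths of a Kripke structure. -/
def Kripke.paths (K : Kripke AP) : Set (ℕ → K.S) :=
  {s | s 0 ∈ K.init ∧ ∀ i, K.tr (s i) (s (i + 1))}

theorem Kripke.recognizable_paths (K : Kripke AP) : Recognizable K.paths := by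
  have := K.finS
  have hstep : Recognizable {s : ℕ → K.S | ∀ i, suffix s i ∈
      ⋃ x, {s | s 0 = x ∧ suffix s 1 ∈ {s | K.tr x (s 0)}}} :=
    (Recognizable.iUnion fun x => (Recognizable.first (K.tr x)).cons (· = x)).always
  convert (Recognizable.first (· ∈ K.init)).inter hstep using 1
  ext s
  simp [paths, suffix, add_comm]

theorem Kripke.recognizable_traces (K : Kripke AP) : Recognizable K.Traces := by
  convert ((K.recognizable_paths.comap (Prod.snd : (AP → unitInterval) × K.S → K.S)).inter
    (Recognizable.first fun l : (AP → unitInterval) × K.S => l.1 = K.L l.2).always).proj using 1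
  ext t
  refine exists_congr fun s => ?_
  simp [paths, wordPair, suffix_apply_zero, funext_iff, and_assoc, Function.comp_def]

theorem LassoSeparable.exists_recognizable {f g : (ℕ → Γ) → ℝ} {v : ℝ} (h : LassoSeparable f g v)
    {r : ℝ → ℝ → Prop} (hr : r = (· < ·) ∨ r = (· > ·)) :
    ∃ X, Recognizable X ∧ (∀ w, r (f w) v → w ∈ X) ∧
      ∀ w ∈ X, EventuallyPeriodic w → r (g w) v ∨ g w = v := by
  obtain ⟨X, hX, hf, hg⟩ := h
  obtain rfl | rfl := hr
  · exact ⟨Xᶜ, hX.compl, fun w hw hwX => ((hf w trivial).2 hwX).not_gt hw, fun w hwX hw =>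
      (not_lt.1 fun hlt => hwX ((hg w hw).1 hlt)).lt_or_eq⟩
  · exact ⟨X, hX, fun w => (hf w trivial).1, fun w hwX hw =>
      ((hg w hw).2 hwX).lt_or_eq.imp_right Eq.symm⟩

theorem stmt_6_general {AP Var D : Type} [DecidableEq Var] (η : D → ℕ → ℝ)
    (hη01 : ∀ d i, η d i ∈ Icc (0 : ℝ) 1)
    (hη : ∀ d, Filter.Tendsto (η d) Filter.atTop (nhds 0)) {bowtie : ℝ → ℝ → Prop}
    (hbow : bowtie = (· < ·) ∨ bowtie = (· > ·)) {k : ℕ} (vs : Fin k → Var)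
    (ψ : TForm AP Var D) (hfree : freeVars ψ ⊆ range vs) {T : Set (Trace AP)}
    (hT : Recognizable T) (v : ℝ) :
    ∃ A : NBA ((AP × Fin k) → unitInterval),
      ∀ (ts : Fin k → Trace AP) (ρ : Var → Trace AP), (∀ i, ρ (vs i) = ts i) →
        ((bowtie (tsem η ψ ρ T) v ∧ ∀ i, ts i ∈ T) → A.Accepts (encode ts)) ∧
        ((A.Accepts (encode ts) ∧ IsLasso (encode ts)) →
          (∀ i, ts i ∈ T ∧ IsLasso (ts i)) ∧
          (bowtie (tsem η ψ ρ {t ∈ T | IsLasso t}) v ∨ tsem η ψ ρ {t ∈ T | IsLasso t} = v)) := by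
  obtain ⟨X, hX, hmem, hlasso⟩ := (lassoSeparable_tsem hη01 hη hT ψ v).exists_recognizable hbow
  have htraces : Recognizable (⋂ i : Fin k,
      {w : ℕ → AP × Fin k → unitInterval | (fun n p => w n (p, i)) ∈ T}) :=
    .iInter fun i => hT.comap fun (l : AP × Fin k → unitInterval) p => l (p, i)
  obtain ⟨A, hA⟩ := ((hX.comap (decodeLetter vs)).inter htraces).exists_nba
  refine ⟨A, fun ts ρ hρ => ?_⟩
  have hvalue : ∀ T', tsem η ψ (assignOf (decodeLetter vs ∘ encode ts)) T' = tsem η ψ ρ T' :=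
    fun T' => tsem_congr η ψ T' fun x hx => by
      obtain ⟨i, rfl⟩ := hfree hx
      exact assignOf_decodeLetter_encode hρ i
  rw [hA, ← hvalue, ← hvalue]
  refine ⟨fun ⟨hv, hts⟩ => ⟨hmem _ hv, mem_iInter.2 hts⟩, fun ⟨⟨hw, hts⟩, hper⟩ => ?_⟩
  have hmap {Γ : Type} (g : _ → Γ) := EventuallyPeriodic.map (w := encode ts) hper g
  exact ⟨fun i => ⟨mem_iInter.1 hts i, hmap fun l p => l (p, i)⟩, hlasso _ hw (hmap _)⟩

/-- Lemma `orna++`. For `⋈ ∈ {<,>}` (with reflexive closure `⋈̲`), every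
HyperLTL_temp formula `ψ` with free variables among `π₁,…,π_k`, every weighted Kripke
structure `K` and every `v ∈ [0,1]`, there is an NBA over `W^{AP_{≤k}}` such that for every
trace assignment `Π`: (1) if `⟦ψ⟧_Π^{𝕋(K)} ⋈ v` and all traces of `Π` are in `𝕋(K)` then it
accepts `t_Π`; (2) if it accepts a lasso `t_Π` then all traces of `Π` are in `𝕃(K)` and
`⟦ψ⟧_Π^{𝕃(K)} ⋈̲ v`. -/
theorem stmt_6 {AP Var D : Type} [DecidableEq Var] [Finite D]
    (η : D → ℕ → ℝ) (hη : ∀ d, IsDiscounting (η d))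
    (bowtie : ℝ → ℝ → Prop)
    (hbow : bowtie = (· < ·) ∨ bowtie = (· > ·))
    (k : ℕ) (vs : Fin k → Var) (hinj : Function.Injective vs)
    (ψ : TForm AP Var D) (hfree : freeVars ψ ⊆ Set.range vs)
    (K : Kripke AP) (v : ℝ) (hv : v ∈ Set.Icc (0:ℝ) 1) :
    ∃ A : NBA ((AP × Fin k) → unitInterval),
      ∀ (ts : Fin k → Trace AP) (ρ : Var → Trace AP),
        (∀ i, ρ (vs i) = ts i) →
        ((bowtie (tsem η ψ ρ K.Traces) v ∧ (∀ i, ts i ∈ K.Traces)) →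
          A.Accepts (encode ts)) ∧
        ((A.Accepts (encode ts) ∧ IsLasso (encode ts)) →
          (∀ i, ts i ∈ K.Lassos) ∧
          (bowtie (tsem η ψ ρ K.Lassos) v ∨ tsem η ψ ρ K.Lassos = v)) :=
  stmt_6_general η (fun d => (hη d).2.1) (fun d => (hη d).2.2) hbow vs ψ hfree
    K.recognizable_traces v

end
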